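/- Let n ≥ 2 be an integer and k ∈ ℂ. Define G = −10 − 21k − 14k^2 − 23n − 32kn − 16n^2 + 8kn^2 + 8k^2 n^2 + 8n^3 + 16kn^3 + 8n^4, H = −22 − 22k − 22n − 15kn − 10k^2 n − 30n^2 − 50kn^2 − 30n^3 + 40kn^3 + 40k^2 n^3 + 40n^4 + 80kn^4 + 40n^5, and F = −28 − 130k − 170k^2 − 68k^3 − 222n − 532kn − 161k^2 n + 228k^3 n + 76k^4 n − 186n^2 + 687kn^2 + 1892k^2 n^2 + 908k^3 n^2 + 730n^3 + 2780kn^3 + 1508k^2 n^3 − 800k^3 n^3 − 320k^4 n^3 + 1106n^4 + 536kn^4 − 2520k^2 n^4 − 1360k^3 n^4 − 136n^5 − 2608kn^5 − 2064k^2 n^5 + 128k^3 n^5 + 64k^4 n^5 − 888n^6 − 1328kn^6 + 384k^2 n^6 + 256k^3 n^6 − 304n^7 + 384kn^7 + 384k^2 n^7 + 128n^8 + 256kn^8 + 64n^9. Assume 1+k+n ≠ 0, −1−k+2kn+2n^2 ≠ 0, −1+n+2kn+2n^2 ≠ 0, G ≠ 0, and H ≠ 0. Set c = −n(k+2n+2kn+2n^2)(−3−2k+4kn+4n^2)/(1+k+n)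 and λ = −(1+k+n)·F / (7(1+2n)(−1−k+2kn+2n^2)(−1+n+2kn+2n^2)·G·H). Then p_n(c,λ) = 0, i.e. f(c,n) + λ·g(c,n) + λ^2·h(c,n) = 0. -/

import Mathlib

/-- The polynomial `f(c,n)` from the type-C truncation polynomial. -/
noncomputable def fC (c n : ℂ) : ℂ :=
  -204 * c ^ 2 - 192 * c ^ 3 + 171 * c ^ 4 + 952 * c * n - 4612 * c ^ 2 * n
    + 2348 * c ^ 3 * n - 38 * c ^ 4 * n + 1568 * n ^ 2 - 7708 * c * n ^ 2
    + 1788 * c ^ 2 * n ^ 2 + 2401 * c ^ 3 * n ^ 2 - 74 * c ^ 4 * n ^ 2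
    + 560 * n ^ 3 - 18936 * c * n ^ 3 + 22280 * c ^ 2 * n ^ 3
    - 2112 * c ^ 3 * n ^ 3 + 8 * c ^ 4 * n ^ 3 - 16304 * n ^ 4
    + 18640 * c * n ^ 4 + 3420 * c ^ 2 * n ^ 4 - 364 * c ^ 3 * n ^ 4
    + 8 * c ^ 4 * n ^ 4 - 17408 * n ^ 5 + 27680 * c * n ^ 5
    - 10576 * c ^ 2 * n ^ 5 + 304 * c ^ 3 * n ^ 5 - 3264 * n ^ 6
    - 3072 * c * n ^ 6 + 2736 * c ^ 2 * n ^ 6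

/-- The polynomial `g(c,n)` from the type-C truncation polynomial. -/
noncomputable def gC (c n : ℂ) : ℂ :=
  -14 * (c - 1) * (2 * c - 1) * (22 + 5 * c) * (n - 2) * (n - 1)
    * (3 * c + 10 * n + 2 * c * n + 12 * n ^ 2)
    * (5 * c + 28 * n + 2 * c * n + 40 * n ^ 2)

/-- The polynomial `h(c,n)` from the type-C truncation polynomial. -/
noncomputable def hC (c n : ℂ) : ℂ :=
  49 * (c - 1) ^ 2 * (22 + 5 * c) ^ 2
    * (21 * c ^ 2 + 70 * c * n - 14 * c ^ 2 * n + 200 * n ^ 2 - 135 * c * n ^ 2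
      - 26 * c ^ 2 * n ^ 2 + 380 * n ^ 3 - 176 * c * n ^ 3 + 8 * c ^ 2 * n ^ 3
      + 436 * n ^ 4 + 132 * c * n ^ 4 + 8 * c ^ 2 * n ^ 4 + 448 * n ^ 5
      + 112 * c * n ^ 5 + 336 * n ^ 6)

/-- The type-C truncation polynomial `p_n(c,λ) = f(c,n) + λ·g(c,n) + λ²·h(c,n)`. -/
noncomputable def pC (n c lam : ℂ) : ℂ := fC c n + lam * gC c n + lam ^ 2 * hC c n

/-!
Write `x = 1 + k + n` for the shifted level. The central charge `c` is invariant under the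
involution `x ↦ x' = (n + 1) / (2 (2 n - 1) x)`, so a generic value of `c` is attained at exactly
the two levels `x` and `x'`. In terms of `μ = 7 (c - 1) (22 + 5 c) λ` the parametrization becomes
`μ = -F / (x G)`, and `p_n` is a quadratic polynomial in `μ` whose two roots are the values of
`-F / (x G)` at `x` and at `x'`: up to a scalar, `p_n` is the norm of the linear polynomial
`x G μ + F`.
-/

/-- The central charge of `W^k(sp_{2n}, f_prin)`, for rank `n` and level `k`. -/
noncomputable def centralChargeC (n k : ℂ) : ℂ :=
  -n * (k + 2 * n + 2 * k * n + 2 * n ^ 2) * (-3 - 2 * k + 4 * k * n + 4 * n ^ 2) / (1 + k + n)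

/-- The polynomial `G`, a factor of the denominator of `λ`. -/
noncomputable def levelG (n k : ℂ) : ℂ :=
  -10 - 21 * k - 14 * k ^ 2 - 23 * n - 32 * k * n - 16 * n ^ 2
    + 8 * k * n ^ 2 + 8 * k ^ 2 * n ^ 2 + 8 * n ^ 3 + 16 * k * n ^ 3 + 8 * n ^ 4

/-- The polynomial `H`, a factor of the denominator of `λ`. -/
noncomputable def levelH (n k : ℂ) : ℂ :=
  -22 - 22 * k - 22 * n - 15 * k * n - 10 * k ^ 2 * n - 30 * n ^ 2
    - 50 * k * n ^ 2 - 30 * n ^ 3 + 40 * k * n ^ 3 + 40 * k ^ 2 * n ^ 3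
    + 40 * n ^ 4 + 80 * k * n ^ 4 + 40 * n ^ 5

/-- The polynomial `F`, the main factor of the numerator of `λ`. -/
noncomputable def levelF (n k : ℂ) : ℂ :=
  -28 - 130 * k - 170 * k ^ 2 - 68 * k ^ 3 - 222 * n - 532 * k * n
    - 161 * k ^ 2 * n + 228 * k ^ 3 * n + 76 * k ^ 4 * n - 186 * n ^ 2
    + 687 * k * n ^ 2 + 1892 * k ^ 2 * n ^ 2 + 908 * k ^ 3 * n ^ 2
    + 730 * n ^ 3 + 2780 * k * n ^ 3 + 1508 * k ^ 2 * n ^ 3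
    - 800 * k ^ 3 * n ^ 3 - 320 * k ^ 4 * n ^ 3 + 1106 * n ^ 4
    + 536 * k * n ^ 4 - 2520 * k ^ 2 * n ^ 4 - 1360 * k ^ 3 * n ^ 4
    - 136 * n ^ 5 - 2608 * k * n ^ 5 - 2064 * k ^ 2 * n ^ 5
    + 128 * k ^ 3 * n ^ 5 + 64 * k ^ 4 * n ^ 5 - 888 * n ^ 6
    - 1328 * k * n ^ 6 + 384 * k ^ 2 * n ^ 6 + 256 * k ^ 3 * n ^ 6
    - 304 * n ^ 7 + 384 * k * n ^ 7 + 384 * k ^ 2 * n ^ 7 + 128 * n ^ 8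
    + 256 * k * n ^ 8 + 64 * n ^ 9

/-- The value of `λ` at rank `n` and level `k`. -/
noncomputable def lambdaC (n k : ℂ) : ℂ :=
  -(1 + k + n) * levelF n k
    / (7 * (1 + 2 * n) * (-1 - k + 2 * k * n + 2 * n ^ 2)
        * (-1 + n + 2 * k * n + 2 * n ^ 2) * levelG n k * levelH n k)

/-- The conjugate of `levelG` under `x ↦ x' = (n + 1) / (2 (2 n - 1) x)`, where `x = 1 + k + n`,
cleared of denominators: it is `2 (2 n - 1)² x²` times the value of `levelG` at the shifted
level `x'`. -/
noncomputable def conjLevelG (n k : ℂ) : ℂ :=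
  (n + 1) ^ 2 * (4 * n ^ 2 - 7)
    + (n + 1) * (2 * n - 1) * (7 - 4 * n - 8 * n ^ 2) * (1 + k + n)
    + 2 * (2 * n - 1) ^ 2 * (2 * n ^ 2 + 2 * n - 3) * (1 + k + n) ^ 2

/-- The conjugate of `levelF` under `x ↦ x' = (n + 1) / (2 (2 n - 1) x)`, where `x = 1 + k + n`,
cleared of denominators: it is `4 (2 n - 1)³ x⁴ / (n + 1)` times the value of `levelF` at the
shifted level `x'`. -/
noncomputable def conjLevelF (n k : ℂ) : ℂ :=
  n * (n + 1) ^ 3 * (2 * n + 1) * (4 * n ^ 2 - 19)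
    - 2 * (n + 1) ^ 2 * (17 + 19 * n - 151 * n ^ 2 - 120 * n ^ 3 + 20 * n ^ 4 + 32 * n ^ 5)
      * (1 + k + n)
    + (n + 1) * (2 * n - 1) * (n - 2) * (-17 + 84 * n + 344 * n ^ 2 + 312 * n ^ 3 + 96 * n ^ 4)
      * (1 + k + n) ^ 2
    + 2 * (2 * n - 1) ^ 2 * (6 + 102 * n + 201 * n ^ 2 + 80 * n ^ 3 - 60 * n ^ 4 - 32 * n ^ 5)
      * (1 + k + n) ^ 3
    + 4 * n * (2 * n + 1) * (2 * n - 1) ^ 3 * (2 * n ^ 2 + 2 * n - 9) * (1 + k + n) ^ 4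

/-- The rescaling `μ = 7 (c - 1) (22 + 5 c) λ` of `λ`, in which the coefficients of `p_n` lose their
common factors and the parametrization becomes `μ = -F / (x G)`. -/
noncomputable def reducedLambda (c lam : ℂ) : ℂ := 7 * (c - 1) * (22 + 5 * c) * lam

/-- The linear coefficient of `p_n` with respect to `reducedLambda`. -/
noncomputable def reducedGC (c n : ℂ) : ℂ :=
  -2 * (2 * c - 1) * (n - 2) * (n - 1) * (3 * c + 10 * n + 2 * c * n + 12 * n ^ 2)
    * (5 * c + 28 * n + 2 * c * n + 40 * n ^ 2)

/-- The quadratic coefficient of `p_n` with respect to `reducedLambda`. -/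
noncomputable def reducedHC (c n : ℂ) : ℂ :=
  21 * c ^ 2 + 70 * c * n - 14 * c ^ 2 * n + 200 * n ^ 2 - 135 * c * n ^ 2
    - 26 * c ^ 2 * n ^ 2 + 380 * n ^ 3 - 176 * c * n ^ 3 + 8 * c ^ 2 * n ^ 3
    + 436 * n ^ 4 + 132 * c * n ^ 4 + 8 * c ^ 2 * n ^ 4 + 448 * n ^ 5
    + 112 * c * n ^ 5 + 336 * n ^ 6

theorem pC_eq_quadratic (n c lam : ℂ) :
    pC n c lam = fC c n + reducedLambda c lam * reducedGC c n
      + reducedLambda c lam ^ 2 * reducedHC c n := by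
  unfold pC gC hC reducedLambda reducedGC reducedHC
  ring

section ShiftedLevel

variable (n k : ℂ)

theorem centralChargeC_eq :
    centralChargeC n k =
      -n * ((2 * n + 1) * (1 + k + n) - (n + 1)) * ((4 * n - 2) * (1 + k + n) - (2 * n + 1))
        / (1 + k + n) := by
  unfold centralChargeC
  ring

theorem levelG_eq :
    levelG n k = (2 * n ^ 2 + 2 * n - 3) + (7 - 4 * n - 8 * n ^ 2) * (1 + k + n)
      + 2 * (4 * n ^ 2 - 7) * (1 + k + n) ^ 2 := by
  unfold levelG
  ring

theorem levelF_eq :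
    levelF n k = n * (n + 1) * (2 * n + 1) * (2 * n ^ 2 + 2 * n - 9)
      + (6 + 102 * n + 201 * n ^ 2 + 80 * n ^ 3 - 60 * n ^ 4 - 32 * n ^ 5) * (1 + k + n)
      + (n - 2) * (-17 + 84 * n + 344 * n ^ 2 + 312 * n ^ 3 + 96 * n ^ 4) * (1 + k + n) ^ 2
      - 4 * (17 + 19 * n - 151 * n ^ 2 - 120 * n ^ 3 + 20 * n ^ 4 + 32 * n ^ 5) * (1 + k + n) ^ 3
      + 4 * n * (2 * n + 1) * (2 * n - 1) * (4 * n ^ 2 - 19) * (1 + k + n) ^ 4 := by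
  unfold levelF
  ring

end ShiftedLevel

section CentralCharge

variable {n k : ℂ}

theorem centralChargeC_sub_one (hx : 1 + k + n ≠ 0) :
    centralChargeC n k - 1 =
      -((1 + 2 * n) * (-1 - k + 2 * k * n + 2 * n ^ 2) * (-1 + n + 2 * k * n + 2 * n ^ 2))
        / (1 + k + n) := by
  unfold centralChargeC
  field_simp
  ring

theorem twentyTwo_add_five_mul_centralChargeC (hx : 1 + k + n ≠ 0) :
    22 + 5 * centralChargeC n k = -levelH n k / (1 + k + n) := by
  unfold centralChargeC levelH
  field_simp
  ring

theorem fC_centralChargeC (hx : 1 + k + n ≠ 0) :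
    (1 + k + n) ^ 4 * fC (centralChargeC n k) n =
      n ^ 2 * (2 * n + 1) ^ 2 * (levelF n k * conjLevelF n k) := by
  rw [centralChargeC_eq, levelF_eq]
  unfold fC conjLevelF
  generalize 1 + k + n = x at hx ⊢
  field_simp
  ring

theorem reducedGC_centralChargeC (hx : 1 + k + n ≠ 0) :
    (1 + k + n) ^ 3 * reducedGC (centralChargeC n k) n =
      n ^ 2 * (2 * n + 1) ^ 2 * (levelG n k * conjLevelF n k + conjLevelG n k * levelF n k) := by
  rw [centralChargeC_eq, levelF_eq, levelG_eq]
  unfold reducedGC conjLevelF conjLevelG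
  generalize 1 + k + n = x at hx ⊢
  field_simp
  ring

theorem reducedHC_centralChargeC (hx : 1 + k + n ≠ 0) :
    (1 + k + n) ^ 2 * reducedHC (centralChargeC n k) n =
      n ^ 2 * (2 * n + 1) ^ 2 * (levelG n k * conjLevelG n k) := by
  rw [centralChargeC_eq, levelG_eq]
  unfold reducedHC conjLevelG
  generalize 1 + k + n = x at hx ⊢
  field_simp
  ring

theorem pC_centralChargeC_factorization (hx : 1 + k + n ≠ 0) (lam : ℂ) :
    (1 + k + n) ^ 4 * pC n (centralChargeC n k) lam =
      n ^ 2 * (2 * n + 1) ^ 2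
        * (((1 + k + n) * levelG n k * reducedLambda (centralChargeC n k) lam + levelF n k)
          * ((1 + k + n) * conjLevelG n k * reducedLambda (centralChargeC n k) lam
            + conjLevelF n k)) := by
  rw [pC_eq_quadratic]
  generalize reducedLambda (centralChargeC n k) lam = μ
  linear_combination fC_centralChargeC hx
    + (1 + k + n) * μ * reducedGC_centralChargeC hx
    + (1 + k + n) ^ 2 * μ ^ 2 * reducedHC_centralChargeC hx

theorem reducedLambda_centralChargeC_lambdaC (hn : 1 + 2 * n ≠ 0) (hx : 1 + k + n ≠ 0)
    (hA : -1 - k + 2 * k * n + 2 * n ^ 2 ≠ 0) (hB : -1 + n + 2 * k * n + 2 * n ^ 2 ≠ 0)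
    (hG : levelG n k ≠ 0) (hH : levelH n k ≠ 0) :
    reducedLambda (centralChargeC n k) (lambdaC n k) =
      -levelF n k / ((1 + k + n) * levelG n k) := by
  rw [reducedLambda, centralChargeC_sub_one hx, twentyTwo_add_five_mul_centralChargeC hx, lambdaC]
  generalize -1 - k + 2 * k * n + 2 * n ^ 2 = a at hA ⊢
  generalize -1 + n + 2 * k * n + 2 * n ^ 2 = b at hB ⊢
  field_simp

theorem typeC_parametrization_on_curve_general (hn : 1 + 2 * n ≠ 0) (hx : 1 + k + n ≠ 0)
    (hA : -1 - k + 2 * k * n + 2 * n ^ 2 ≠ 0) (hB : -1 + n + 2 * k * n + 2 * n ^ 2 ≠ 0)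
    (hG : levelG n k ≠ 0) (hH : levelH n k ≠ 0) :
    pC n (centralChargeC n k) (lambdaC n k) = 0 := by
  have first_factor_eq_zero : (1 + k + n) * levelG n k
      * reducedLambda (centralChargeC n k) (lambdaC n k) + levelF n k = 0 := by
    rw [reducedLambda_centralChargeC_lambdaC hn hx hA hB hG hH,
      mul_div_cancel₀ _ (mul_ne_zero hx hG), neg_add_cancel]
  have factorization := pC_centralChargeC_factorization hx (lambdaC n k)
  rw [first_factor_eq_zero, zero_mul, mul_zero] at factorization
  exact (mul_eq_zero_iff_left (pow_ne_zero 4 hx)).mp factorization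

end CentralCharge

/-- The rational parametrization of the truncation curve `V(I_n)` by the level `k`
of the type-C principal W-algebra `W^k(sp_{2n}, f_prin)` lies on `{p_n = 0}`. -/
theorem typeC_parametrization_on_curve (n : ℤ) (hn : 2 ≤ n) (k : ℂ)
    (nn : ℂ) (hnn : nn = (n : ℂ))
    (G H F c lam : ℂ)
    (hG : G = -10 - 21 * k - 14 * k ^ 2 - 23 * nn - 32 * k * nn - 16 * nn ^ 2
      + 8 * k * nn ^ 2 + 8 * k ^ 2 * nn ^ 2 + 8 * nn ^ 3 + 16 * k * nn ^ 3 + 8 * nn ^ 4)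
    (hH : H = -22 - 22 * k - 22 * nn - 15 * k * nn - 10 * k ^ 2 * nn - 30 * nn ^ 2
      - 50 * k * nn ^ 2 - 30 * nn ^ 3 + 40 * k * nn ^ 3 + 40 * k ^ 2 * nn ^ 3
      + 40 * nn ^ 4 + 80 * k * nn ^ 4 + 40 * nn ^ 5)
    (hF : F = -28 - 130 * k - 170 * k ^ 2 - 68 * k ^ 3 - 222 * nn - 532 * k * nn
      - 161 * k ^ 2 * nn + 228 * k ^ 3 * nn + 76 * k ^ 4 * nn - 186 * nn ^ 2
      + 687 * k * nn ^ 2 + 1892 * k ^ 2 * nn ^ 2 + 908 * k ^ 3 * nn ^ 2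
      + 730 * nn ^ 3 + 2780 * k * nn ^ 3 + 1508 * k ^ 2 * nn ^ 3
      - 800 * k ^ 3 * nn ^ 3 - 320 * k ^ 4 * nn ^ 3 + 1106 * nn ^ 4
      + 536 * k * nn ^ 4 - 2520 * k ^ 2 * nn ^ 4 - 1360 * k ^ 3 * nn ^ 4
      - 136 * nn ^ 5 - 2608 * k * nn ^ 5 - 2064 * k ^ 2 * nn ^ 5
      + 128 * k ^ 3 * nn ^ 5 + 64 * k ^ 4 * nn ^ 5 - 888 * nn ^ 6
      - 1328 * k * nn ^ 6 + 384 * k ^ 2 * nn ^ 6 + 256 * k ^ 3 * nn ^ 6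
      - 304 * nn ^ 7 + 384 * k * nn ^ 7 + 384 * k ^ 2 * nn ^ 7 + 128 * nn ^ 8
      + 256 * k * nn ^ 8 + 64 * nn ^ 9)
    (h1 : 1 + k + nn ≠ 0)
    (h2 : -1 - k + 2 * k * nn + 2 * nn ^ 2 ≠ 0)
    (h3 : -1 + nn + 2 * k * nn + 2 * nn ^ 2 ≠ 0)
    (hGne : G ≠ 0) (hHne : H ≠ 0)
    (hc : c = -nn * (k + 2 * nn + 2 * k * nn + 2 * nn ^ 2)
        * (-3 - 2 * k + 4 * k * nn + 4 * nn ^ 2) / (1 + k + nn))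
    (hlam : lam = -(1 + k + nn) * F
        / (7 * (1 + 2 * nn) * (-1 - k + 2 * k * nn + 2 * nn ^ 2)
            * (-1 + nn + 2 * k * nn + 2 * nn ^ 2) * G * H)) :
    pC nn c lam = 0 := by
  subst hnn hG hH hF hc hlam
  exact typeC_parametrization_on_curve_general (by norm_cast; lia) h1 h2 h3 hGne hHne
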